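/- For every positive integer p there exists a constant A'_p > 0, depending only on p, with the following property. Let 0 < β < α < 1, let B be an open Euclidean ball in ℂⁿ, and let f be analytic and sectionally p-valent in B. Then sup_{αB} |f| ≤ c_p(α, β) · sup_{βB} |f|, where αB and βB denote the concentric balls of radii scaled, respectively, by α and β, and c_p(α, β) = ( (p+1)·α^p + A'_p/(1−α)^{2p+1} ) / β^p. -/

import Mathlib

open Metric Set

noncomputable section

/-- `f` is sectionally `p`-valent in `W ⊆ ℂⁿ`: on every complex affine line
`L = {a + t·b : t ∈ ℂ}` (with `b ≠ 0`) and every `c ∈ ℂ`, the equation `f = c` has at most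
`p` solutions on `L ∩ W`. -/
def SectionallyPValentOn {n : ℕ} (f : EuclideanSpace ℂ (Fin n) → ℂ)
    (W : Set (EuclideanSpace ℂ (Fin n))) (p : ℕ) : Prop :=
  ∀ a b : EuclideanSpace ℂ (Fin n), b ≠ 0 → ∀ c : ℂ, ∀ s : Finset ℂ,
    (∀ t ∈ s, a + t • b ∈ W ∧ f (a + t • b) = c) → s.card ≤ p

/-!
The disc case comes from the potential `u = log √(1 + |f|²)`. By subharmonicity `u w` is at most the
Poisson average of `u` over the unit circle. Green's identity in the logarithmic coordinates
`ζ = log z`, tested against a holomorphic kernel whose real part is the Poisson kernel, moves this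
average to the circle `|z| = β`, where `u` is bounded, at the cost of the integral of the kernel
times the gradient of `u`. By `2 |k v| ≤ p |k|² + |v|² / p` that cost splits into the explicit
`L²` norm of the kernel and the Dirichlet energy of `u`. Each value of `f` is taken at most `p`
times, so a change of variables bounds the energy by `p` times the integral of `1 / (1 + |w|²)` over
a disc containing the image. This amounts to half of `sup u`, which is absorbed by letting the
radius vary. In a ball, the disc estimate is applied on every complex line through the centre.
-/

section Development

open Real MeasureTheory Filter Topology
open scoped ComplexConjugate

section PoissonKernel

variable {c w : ℂ} {R : ℝ}

lemma poissonKernel_nonneg {z : ℂ} (hz : z ∈ sphere c R) (hw : w ∈ ball c R) :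
    0 ≤ poissonKernel c w z := by
  rw [mem_sphere_iff_norm] at hz
  rw [mem_ball_iff_norm] at hw
  rw [poissonKernel, hz]
  have : ‖w - c‖ ^ 2 ≤ R ^ 2 := by gcongr
  exact div_nonneg (by linarith) (by positivity)

lemma circleIntegrable_poissonKernel_mul {h : ℂ → ℝ} (hw : w ∈ ball c R)
    (hh : ContinuousOn h (sphere c R)) :
    CircleIntegrable (fun z => poissonKernel c w z * h z) c R := by
  have hR : |R| = R := abs_of_pos (pos_of_mem_ball hw)
  have hP : ContinuousOn (poissonKernel c w) (sphere c |R|) := by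
    rw [poissonKernel_eq_re_herglotzRieszKernel]
    exact Complex.continuous_re.comp_continuousOn (continuousOn_herglotzRieszKernel_sphere hw)
  exact (hP.mul (by rwa [hR])).circleIntegrable'

lemma circleAverage_poissonKernel (hw : w ∈ ball c R) :
    circleAverage (poissonKernel c w) c R = 1 := by
  have hone := (InnerProductSpace.harmonicOnNhd_const (1 : ℝ)).circleAverage_poissonKernel_smul hw
  rwa [show (poissonKernel c w • fun _ => (1 : ℝ)) = poissonKernel c w by ext z; simp] at hone

lemma circleAverage_poissonKernel_mul_const (hw : w ∈ ball c R) (a : ℝ) :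
    circleAverage (fun z => poissonKernel c w z * a) c R = a := by
  simp_rw [mul_comm _ a, ← smul_eq_mul]
  rw [circleAverage_fun_smul, circleAverage_poissonKernel hw, smul_eq_mul, mul_one]

lemma circleAverage_poissonKernel_mul_add_const {h : ℂ → ℝ} (hw : w ∈ ball c R)
    (hh : ContinuousOn h (sphere c R)) (a : ℝ) :
    circleAverage (fun z => poissonKernel c w z * (h z + a)) c R =
      circleAverage (fun z => poissonKernel c w z * h z) c R + a := by
  simp_rw [mul_add]
  rw [circleAverage_fun_add (circleIntegrable_poissonKernel_mul hw hh)
    (circleIntegrable_poissonKernel_mul hw continuousOn_const),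
    circleAverage_poissonKernel_mul_const hw]

lemma circleAverage_poissonKernel_mul_le {h : ℂ → ℝ} {B : ℝ} (hw : w ∈ ball c R)
    (hh : ContinuousOn h (sphere c R)) (hB : ∀ z ∈ sphere c R, h z ≤ B) :
    circleAverage (fun z => poissonKernel c w z * h z) c R ≤ B := by
  have hR : |R| = R := abs_of_pos (pos_of_mem_ball hw)
  calc circleAverage (fun z => poissonKernel c w z * h z) c R
      ≤ circleAverage (fun z => poissonKernel c w z * B) c R :=
        circleAverage_mono (circleIntegrable_poissonKernel_mul hw hh)
          (circleIntegrable_poissonKernel_mul hw continuousOn_const) fun z hz =>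
          mul_le_mul_of_nonneg_left (hB z (hR ▸ hz)) (poissonKernel_nonneg (hR ▸ hz) hw)
    _ = B := circleAverage_poissonKernel_mul_const hw B

lemma exists_entire_add_conj_of_mem_span_fourier {T : ℝ} {q : C(AddCircle T, ℂ)}
    (hq : q ∈ Submodule.span ℂ (range (@fourier T))) :
    ∃ P Q : ℂ → ℂ, Differentiable ℂ P ∧ Differentiable ℂ Q ∧
      ∀ x, q x = P (AddCircle.toCircle x) + conj (Q (AddCircle.toCircle x)) := by
  induction hq using Submodule.span_induction with
  | mem q hq =>
    obtain ⟨n, rfl⟩ := hq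
    rcases Int.eq_nat_or_neg n with ⟨k, rfl | rfl⟩
    · refine ⟨fun z => z ^ k, 0, by fun_prop, differentiable_const 0, fun x => ?_⟩
      simp [fourier_apply, AddCircle.toCircle_nsmul]
    · refine ⟨0, fun z => z ^ k, differentiable_const 0, by fun_prop, fun x => ?_⟩
      simp [fourier_apply, AddCircle.toCircle_nsmul, AddCircle.toCircle_neg,
        ← Circle.coe_inv_eq_conj]
  | zero => exact ⟨0, 0, differentiable_const 0, differentiable_const 0, by simp⟩
  | add q₁ q₂ _ _ h₁ h₂ =>
    obtain ⟨P₁, Q₁, hP₁, hQ₁, h₁⟩ := h₁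
    obtain ⟨P₂, Q₂, hP₂, hQ₂, h₂⟩ := h₂
    refine ⟨P₁ + P₂, Q₁ + Q₂, hP₁.add hP₂, hQ₁.add hQ₂, fun x => ?_⟩
    simp only [ContinuousMap.add_apply, Pi.add_apply, h₁, h₂, map_add]
    ring
  | smul a q _ h =>
    obtain ⟨P, Q, hP, hQ, h⟩ := h
    refine ⟨a • P, conj a • Q, hP.const_smul a, hQ.const_smul _, fun x => ?_⟩
    simp only [ContinuousMap.smul_apply, Pi.smul_apply, smul_eq_mul, h, map_mul,
      Complex.conj_conj]
    ring

lemma exists_addCircle_toCircle_eq {T : ℝ} (hT : T ≠ 0) {z : ℂ} (hz : ‖z‖ = 1) :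
    ∃ x : AddCircle T, (AddCircle.toCircle x : ℂ) = z := by
  obtain ⟨x, hx⟩ := (AddCircle.homeomorphCircle hT).surjective ⟨z, mem_sphere_zero_iff_norm.2 hz⟩
  exact ⟨x, by rw [← AddCircle.homeomorphCircle_apply hT, hx]⟩

lemma exists_entire_re_approx_on_unit_sphere {h : ℂ → ℝ} (hh : ContinuousOn h (sphere 0 1))
    {ε : ℝ} (hε : 0 < ε) :
    ∃ Q : ℂ → ℂ, Differentiable ℂ Q ∧ ∀ z ∈ sphere 0 1, |(Q z).re - h z| ≤ ε := by
  have : Fact (0 < 2 * π) := ⟨two_pi_pos⟩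
  let H : C(AddCircle (2 * π), ℂ) :=
    ⟨fun x => h (AddCircle.toCircle x), Complex.continuous_ofReal.comp (hh.comp_continuous
      (continuous_subtype_val.comp AddCircle.continuous_toCircle) fun x =>
        (AddCircle.toCircle x).2)⟩
  have hH : H ∈ (Submodule.span ℂ (range (@fourier (2 * π)))).topologicalClosure := by
    rw [span_fourier_closure_eq_top]
    trivial
  obtain ⟨q, hq, hqH⟩ := Metric.mem_closure_iff.1 hH ε hε
  obtain ⟨P, Q, hP, hQ, hPQ⟩ := exists_entire_add_conj_of_mem_span_fourier hq
  refine ⟨fun z => P z + Q z, hP.add hQ, fun z hz => ?_⟩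
  obtain ⟨x, rfl⟩ := exists_addCircle_toCircle_eq two_pi_pos.ne' (mem_sphere_zero_iff_norm.1 hz)
  have hre : (P (AddCircle.toCircle x) + Q (AddCircle.toCircle x)).re
      - h (AddCircle.toCircle x) = (q x - H x).re := by
    simp [hPQ, H]
  rw [hre]
  calc |(q x - H x).re| ≤ dist (q x) (H x) := dist_eq_norm (q x) _ ▸ Complex.abs_re_le_norm _
    _ = dist (H x) (q x) := dist_comm _ _
    _ ≤ ε := (ContinuousMap.dist_apply_le_dist x).trans hqH.le

lemma exists_entire_re_approx_on_sphere {h : ℂ → ℝ} (hR : 0 < R)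
    (hh : ContinuousOn h (sphere c R)) {ε : ℝ} (hε : 0 < ε) :
    ∃ Q : ℂ → ℂ, Differentiable ℂ Q ∧ ∀ z ∈ sphere c R, |(Q z).re - h z| ≤ ε := by
  obtain ⟨Q, hQ, hQh⟩ := exists_entire_re_approx_on_unit_sphere
    (h := fun z => h (c + R * z)) (hh.comp (by fun_prop) fun z hz => by
      simp [mem_sphere_zero_iff_norm.1 hz, abs_of_pos hR]) hε
  refine ⟨fun z => Q ((z - c) / R), by fun_prop, fun z hz => ?_⟩
  have hz' : (z - c) / R ∈ sphere (0 : ℂ) 1 := by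
    simp [mem_sphere_iff_norm.1 hz, abs_of_pos hR, hR.ne']
  simpa [mul_div_cancel₀ _ (Complex.ofReal_ne_zero.2 hR.ne')] using hQh _ hz'

/-- Subharmonicity of `log ‖g‖`, in exponential form so that zeros of `g` are allowed. -/
lemma norm_le_exp_circleAverage_poissonKernel_mul {g : ℂ → ℂ} {h : ℂ → ℝ}
    (hg : DiffContOnCl ℂ g (ball c R)) (hh : ContinuousOn h (sphere c R))
    (hgh : ∀ z ∈ sphere c R, ‖g z‖ ≤ exp (h z)) (hw : w ∈ ball c R) :
    ‖g w‖ ≤ exp (circleAverage (fun z => poissonKernel c w z * h z) c R) := by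
  set m := circleAverage (fun z => poissonKernel c w z * h z) c R with hm
  have hR : 0 < R := pos_of_mem_ball hw
  suffices key : ∀ ε > 0, ‖g w‖ ≤ exp (m + (ε + ε)) by
    have hlim : Tendsto (fun ε : ℝ => exp (m + (ε + ε))) (𝓝[>] 0) (𝓝 (exp (m + (0 + 0)))) :=
      (Continuous.tendsto (by fun_prop) 0).mono_left nhdsWithin_le_nhds
    simpa using ge_of_tendsto hlim (by filter_upwards [self_mem_nhdsWithin] using key)
  intro ε hε
  obtain ⟨Q, hQ, hQh⟩ := exists_entire_re_approx_on_sphere hR hh hε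
  have hmax : ‖g w * Complex.exp (-Q w)‖ ≤ exp ε := by
    refine Complex.norm_le_of_forall_mem_frontier_norm_le isBounded_ball
      (f := fun z => g z * Complex.exp (-Q z))
      (hg.smul (Differentiable.diffContOnCl (by fun_prop))) (fun z hz => ?_) (subset_closure hw)
    rw [frontier_ball c hR.ne'] at hz
    rw [norm_mul, Complex.norm_exp, Complex.neg_re]
    calc ‖g z‖ * exp (-(Q z).re) ≤ exp (h z) * exp (-(Q z).re) := by gcongr; exact hgh z hz
      _ = exp (h z - (Q z).re) := by rw [← exp_add, sub_eq_add_neg]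
      _ ≤ exp ε := exp_le_exp.2 (by linarith [(abs_le.1 (hQh z hz)).1])
  have hQw : (Q w).re ≤ m + ε := by
    have hharm : InnerProductSpace.HarmonicOnNhd (fun z => (Q z).re) (closedBall c R) :=
      fun z _ => (hQ.analyticAt z).harmonicAt_re
    rw [← hharm.circleAverage_poissonKernel_smul hw, hm,
      ← circleAverage_poissonKernel_mul_add_const hw hh]
    refine circleAverage_mono (circleIntegrable_poissonKernel_mul hw
      (Complex.continuous_re.comp hQ.continuous).continuousOn)
      (circleIntegrable_poissonKernel_mul hw (by fun_prop)) fun z hz => ?_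
    rw [abs_of_pos hR] at hz
    exact mul_le_mul_of_nonneg_left (by linarith [(abs_le.1 (hQh z hz)).2])
      (poissonKernel_nonneg hz hw)
  calc ‖g w‖ = ‖g w * Complex.exp (-Q w)‖ * exp ((Q w).re) := by
        rw [norm_mul, Complex.norm_exp, Complex.neg_re, mul_assoc, ← exp_add, neg_add_cancel,
          exp_zero, mul_one]
    _ ≤ exp ε * exp (m + ε) := by gcongr
    _ = exp (m + (ε + ε)) := by rw [← exp_add]; ring_nf

end PoissonKernel

section LogPotential

/-- The logarithmic potential `log √(1 + ‖f‖²)`, the smooth subharmonic substitute for `log ‖f‖`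
whose Dirichlet energy is controlled by the valency of `f`. -/
def logPotential {X E : Type*} [Norm E] (f : X → E) (z : X) : ℝ := log (1 + ‖f z‖ ^ 2) / 2

section Basic

variable {X E : Type*} [NormedAddCommGroup E] {f : X → E}

lemma exp_logPotential_sq (f : X → E) (z : X) : exp (logPotential f z) ^ 2 = 1 + ‖f z‖ ^ 2 := by
  rw [← exp_nat_mul, logPotential, Nat.cast_ofNat, mul_div_cancel₀ _ two_ne_zero,
    exp_log (by positivity)]

lemma logPotential_nonneg (f : X → E) (z : X) : 0 ≤ logPotential f z :=
  div_nonneg (log_nonneg (by nlinarith [sq_nonneg ‖f z‖])) two_pos.le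

lemma logPotential_le_of_norm_le {z : X} {M : ℝ} (h : ‖f z‖ ≤ M) :
    logPotential f z ≤ log (1 + M ^ 2) / 2 := by
  unfold logPotential
  gcongr

lemma norm_le_exp_logPotential (f : X → E) (z : X) : ‖f z‖ ≤ exp (logPotential f z) :=
  le_of_sq_le_sq (by rw [exp_logPotential_sq]; linarith) (exp_pos _).le

lemma continuousOn_logPotential [TopologicalSpace X] {s : Set X} (hf : ContinuousOn f s) :
    ContinuousOn (logPotential f) s :=
  (ContinuousOn.log (by fun_prop) fun z _ => by positivity).div_const 2

end Basic

/-- The Cauchy–Schwarz inequality for the vectors `(1, f w)` and `(1, f z)`. -/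
lemma norm_one_add_conj_mul_le_exp_logPotential {X : Type*} (f : X → ℂ) (w z : X) :
    ‖1 + conj (f w) * f z‖ ≤ exp (logPotential f z + logPotential f w) := by
  refine le_of_sq_le_sq ?_ (exp_pos _).le
  have htri : ‖1 + conj (f w) * f z‖ ≤ 1 + ‖f w‖ * ‖f z‖ := by
    simpa using norm_add_le 1 (conj (f w) * f z)
  calc ‖1 + conj (f w) * f z‖ ^ 2 ≤ (1 + ‖f w‖ * ‖f z‖) ^ 2 := by gcongr
    _ ≤ (1 + ‖f z‖ ^ 2) * (1 + ‖f w‖ ^ 2) := by nlinarith [sq_nonneg (‖f w‖ - ‖f z‖)]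
    _ = exp (logPotential f z + logPotential f w) ^ 2 := by
      rw [exp_add, mul_pow, exp_logPotential_sq, exp_logPotential_sq]

lemma norm_one_add_conj_mul_self {X : Type*} (f : X → ℂ) (w : X) :
    ‖1 + conj (f w) * f w‖ = exp (logPotential f w + logPotential f w) := by
  rw [exp_add, ← sq, exp_logPotential_sq, Complex.conj_mul']
  norm_cast
  exact Real.norm_of_nonneg (by positivity)

/-- Subharmonicity of the logarithmic potential: apply the exponential form of subharmonicity to
the function `1 + conj (f w) * f`, for which Cauchy–Schwarz is an equality at `w`. -/
lemma logPotential_le_circleAverage_poissonKernel {f : ℂ → ℂ} {c w : ℂ} {R : ℝ}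
    (hf : DiffContOnCl ℂ f (ball c R)) (hw : w ∈ ball c R) :
    logPotential f w ≤ circleAverage (fun z => poissonKernel c w z * logPotential f z) c R := by
  have hcont : ContinuousOn (logPotential f) (sphere c R) :=
    continuousOn_logPotential (hf.continuousOn_ball.mono sphere_subset_closedBall)
  have hsub := norm_le_exp_circleAverage_poissonKernel_mul
    (h := fun z => logPotential f z + logPotential f w)
    ((hf.const_smul (conj (f w))).const_add 1) (hcont.add continuousOn_const)
    (fun z _ => norm_one_add_conj_mul_le_exp_logPotential f w z) hw
  rw [circleAverage_poissonKernel_mul_add_const hw hcont] at hsub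
  have := exp_le_exp.1 ((norm_one_add_conj_mul_self f w).symm.le.trans hsub)
  linarith

end LogPotential

/-- `f` is `p`-valent on `s`: it takes every value at most `p` times there. Solutions are counted
with `Set.encard`, so that an infinite fibre is not `p`-valent for any `p`. -/
def PValentOn {X Y : Type*} (f : X → Y) (s : Set X) (p : ℕ) : Prop :=
  ∀ c, (s ∩ f ⁻¹' {c}).encard ≤ p

namespace PValentOn

variable {W X Y Z : Type*} {f : X → Y} {s : Set X} {p : ℕ}

lemma valency_pos (h : PValentOn f s p) (hs : s.Nonempty) : 0 < p := by
  obtain ⟨x, hx⟩ := hs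
  have hfiber : (s ∩ f ⁻¹' {f x}).Nonempty := ⟨x, hx, rfl⟩
  have hone : (1 : ℕ∞) ≤ p := (one_le_encard_iff_nonempty.2 hfiber).trans (h (f x))
  exact_mod_cast hone

lemma mono {t : Set X} (h : PValentOn f s p) (hts : t ⊆ s) : PValentOn f t p :=
  fun c => (encard_le_encard (inter_subset_inter_left _ hts)).trans (h c)

lemma comp_injOn {g : W → X} {t : Set W} (h : PValentOn f s p) (hg : InjOn g t)
    (hts : MapsTo g t s) : PValentOn (f ∘ g) t p := by
  intro c
  have hmaps : MapsTo g (t ∩ f ∘ g ⁻¹' {c}) (s ∩ f ⁻¹' {c}) := fun x hx => ⟨hts hx.1, hx.2⟩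
  exact (encard_le_encard_of_injOn hmaps (hg.mono inter_subset_left)).trans (h c)

lemma injective_comp {g : Y → Z} (h : PValentOn f s p) (hg : Function.Injective g) :
    PValentOn (g ∘ f) s p := by
  intro c
  by_cases hc : ∃ y, g y = c
  · obtain ⟨y, rfl⟩ := hc
    have hsub : s ∩ g ∘ f ⁻¹' {g y} ⊆ s ∩ f ⁻¹' {y} := fun x hx => ⟨hx.1, hg hx.2⟩
    exact (encard_le_encard hsub).trans (h y)
  · have hempty : s ∩ g ∘ f ⁻¹' {c} = ∅ :=
      eq_empty_of_forall_notMem fun x hx => hc ⟨f x, hx.2⟩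
    simp [hempty]

end PValentOn

section Area

lemma exists_measurable_partition_injOn {X Y : Type*} [TopologicalSpace X]
    [SecondCountableTopology X] [MeasurableSpace X] [OpensMeasurableSpace X] {g : X → Y}
    {s : Set X} (hs : MeasurableSet s) (hg : ∀ x ∈ s, ∃ N ∈ 𝓝 x, InjOn g N) :
    ∃ A : ℕ → Set X, (∀ i, MeasurableSet (A i)) ∧ Pairwise (Function.onFun Disjoint A) ∧
      (∀ i, InjOn g (A i)) ∧ ⋃ i, A i = s := by
  classical
  obtain ⟨b, hb, -, hbasis⟩ := TopologicalSpace.exists_countable_basis X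
  obtain ⟨e, he⟩ := (hb.insert ∅).exists_eq_range (insert_nonempty ∅ b)
  have hopen : ∀ i, IsOpen (e i) := fun i => by
    rcases (he ▸ mem_range_self i : e i ∈ insert ∅ b) with h | h
    · simp [h]
    · exact hbasis.isOpen h
  let B : ℕ → Set X := fun i => if InjOn g (e i) then e i ∩ s else ∅
  have hBinj : ∀ i, InjOn g (B i) := fun i => by
    by_cases h : InjOn g (e i)
    · simpa [B, h] using h.mono inter_subset_left
    · simp [B, h]
  refine ⟨disjointed B, fun i => ?_, disjoint_disjointed B,
    fun i => (hBinj i).mono (disjointed_subset B i), ?_⟩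
  · refine MeasurableSet.disjointed (fun j => ?_) i
    by_cases h : InjOn g (e j) <;> simp [B, h, (hopen j).measurableSet.inter hs]
  · rw [iUnion_disjointed]
    refine subset_antisymm (iUnion_subset fun i => ?_) fun x hx => ?_
    · by_cases h : InjOn g (e i) <;> simp [B, h]
    · obtain ⟨N, hN, hinj⟩ := hg x hx
      obtain ⟨v, hv, hxv, hvN⟩ := hbasis.mem_nhds_iff.1 hN
      obtain ⟨i, rfl⟩ : v ∈ range e := he ▸ mem_insert_of_mem ∅ hv
      exact mem_iUnion.2 ⟨i, by simp [B, hinj.mono hvN, hxv, hx]⟩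

lemma encard_setOf_mem_image_le {ι X Y : Type*} {g : X → Y} {s : Set X} {p : ℕ}
    (hp : PValentOn g s p) {A : ι → Set X} (hA : Pairwise (Function.onFun Disjoint A))
    (hAs : ∀ i, A i ⊆ s) (y : Y) : {i | y ∈ g '' A i}.encard ≤ p := by
  rcases isEmpty_or_nonempty X with hX | hX
  · simp
  choose! x hx using fun i (hi : y ∈ g '' A i) => hi
  refine (encard_le_encard_of_injOn (f := x) (fun i hi => ?_) fun i hi j hj hij => ?_).trans (hp y)
  · exact ⟨hAs i (hx i hi).1, (hx i hi).2⟩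
  · by_contra hne
    exact disjoint_left.1 (hA hne) (hx i hi).1 (hij ▸ (hx j hj).1)

lemma tsum_indicator_image_le {ι X Y : Type*} {g : X → Y} {s : Set X} {p : ℕ}
    (hp : PValentOn g s p) {A : ι → Set X} (hA : Pairwise (Function.onFun Disjoint A))
    (hAs : ∀ i, A i ⊆ s) (φ : Y → ENNReal) (y : Y) :
    ∑' i, (g '' A i).indicator φ y ≤ p * φ y := by
  have hcount : ∑' i, (g '' A i).indicator φ y = ∑' _ : {i | y ∈ g '' A i}, φ y := by
    rw [tsum_subtype {i | y ∈ g '' A i} fun _ => φ y]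
    exact tsum_congr fun i => by simp [indicator]
  rw [hcount, ENNReal.tsum_set_const]
  gcongr
  exact_mod_cast encard_setOf_mem_image_le hp hA hAs y

lemma abs_det_restrictScalars_toSpanSingleton (a : ℂ) :
    |((ContinuousLinearMap.toSpanSingleton ℂ a).restrictScalars ℝ : ℂ →L[ℝ] ℂ).det| = ‖a‖ ^ 2 := by
  have hnorm := Algebra.norm_complex_apply a
  rw [Algebra.norm_apply, Complex.normSq_eq_norm_sq] at hnorm
  have hmul : ((ContinuousLinearMap.toSpanSingleton ℂ a).restrictScalars ℝ : ℂ →L[ℝ] ℂ).toLinearMap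
      = LinearMap.mul ℝ ℂ a := by
    ext x
    simp [mul_comm]
  rw [ContinuousLinearMap.det, hmul, ← abs_of_nonneg (sq_nonneg ‖a‖), ← hnorm]
  rfl

lemma lintegral_image_eq_lintegral_enorm_deriv_sq_mul {g : ℂ → ℂ} {s : Set ℂ}
    (hs : MeasurableSet s) (hg : ∀ z ∈ s, DifferentiableAt ℂ g z) (hinj : InjOn g s)
    (φ : ℂ → ENNReal) :
    ∫⁻ w in g '' s, φ w = ∫⁻ z in s, ‖deriv g z‖ₑ ^ 2 * φ (g z) := by
  rw [lintegral_image_eq_lintegral_abs_det_fderiv_mul volume hs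
    (fun z hz => ((hg z hz).hasDerivAt.hasFDerivAt.restrictScalars ℝ).hasFDerivWithinAt) hinj]
  simp only [abs_det_restrictScalars_toSpanSingleton, ENNReal.ofReal_pow (norm_nonneg _),
    ofReal_norm]

lemma exists_nhds_injOn_of_deriv_ne_zero {g : ℂ → ℂ} {z : ℂ} (hg : AnalyticAt ℂ g z)
    (hz : deriv g z ≠ 0) : ∃ N ∈ 𝓝 z, InjOn g N := by
  have hequiv := hg.hasStrictDerivAt.hasStrictFDerivAt_equiv hz
  exact ⟨_, (hequiv.toOpenPartialHomeomorph g).open_source.mem_nhds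
    hequiv.mem_toOpenPartialHomeomorph_source, (hequiv.toOpenPartialHomeomorph g).injOn⟩

theorem lintegral_enorm_deriv_sq_mul_comp_le {g : ℂ → ℂ} {U : Set ℂ} {p : ℕ} (hU : IsOpen U)
    (hg : DifferentiableOn ℂ g U) (hp : PValentOn g U p) {φ : ℂ → ENNReal} (hφ : Measurable φ) :
    ∫⁻ z in U, ‖deriv g z‖ₑ ^ 2 * φ (g z) ≤ p * ∫⁻ w, φ w := by
  have hregular : MeasurableSet {z | deriv g z ≠ 0} :=
    measurable_deriv g (measurableSet_singleton 0).compl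
  have hgz : ∀ z ∈ U, AnalyticAt ℂ g z := fun z hz => hg.analyticAt (hU.mem_nhds hz)
  obtain ⟨A, hAm, hAd, hAi, hAU⟩ :=
    exists_measurable_partition_injOn (hU.measurableSet.inter hregular)
      fun z hz => exists_nhds_injOn_of_deriv_ne_zero (hgz z hz.1) hz.2
  have hAsub : ∀ i, A i ⊆ U := fun i => ((subset_iUnion A i).trans hAU.le).trans inter_subset_left
  have hAdiff : ∀ i, ∀ z ∈ A i, DifferentiableAt ℂ g z :=
    fun i z hz => (hgz z (hAsub i hz)).differentiableAt
  have him : ∀ i, MeasurableSet (g '' A i) := fun i =>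
    measurable_image_of_fderivWithin (hAm i) (fun z hz =>
      ((hAdiff i z hz).hasDerivAt.hasFDerivAt.restrictScalars ℝ).hasFDerivWithinAt) (hAi i)
  calc ∫⁻ z in U, ‖deriv g z‖ₑ ^ 2 * φ (g z)
      = ∫⁻ z in ⋃ i, A i, ‖deriv g z‖ₑ ^ 2 * φ (g z) := by
        rw [hAU, ← lintegral_inter_add_sdiff _ U hregular]
        rw [setLIntegral_eq_zero (hU.measurableSet.diff hregular)
          fun z hz => by simp [not_not.1 hz.2], add_zero]
    _ = ∑' i, ∫⁻ w, (g '' A i).indicator φ w := by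
        rw [lintegral_iUnion hAm hAd]
        refine tsum_congr fun i => ?_
        rw [lintegral_indicator (him i),
          lintegral_image_eq_lintegral_enorm_deriv_sq_mul (hAm i) (hAdiff i) (hAi i)]
    _ = ∫⁻ w, ∑' i, (g '' A i).indicator φ w :=
        (lintegral_tsum fun i => (hφ.indicator (him i)).aemeasurable).symm
    _ ≤ ∫⁻ w, p * φ w := lintegral_mono fun w => tsum_indicator_image_le hp hAd hAsub φ w
    _ = p * ∫⁻ w, φ w := lintegral_const_mul _ hφ

lemma setIntegral_closedBall_one_div_one_add_norm_sq {M : ℝ} (hM : 0 ≤ M) :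
    ∫ w in closedBall (0 : ℂ) M, 1 / (1 + ‖w‖ ^ 2) = π * log (1 + M ^ 2) := by
  have hradial : ∀ w : ℂ, (closedBall (0 : ℂ) M).indicator (fun w => 1 / (1 + ‖w‖ ^ 2)) w =
      (Iic M).indicator (fun r => 1 / (1 + r ^ 2)) ‖w‖ := fun w => by simp [indicator]
  have hprim : ∀ r : ℝ, HasDerivAt (fun r => log (1 + r ^ 2) / 2) (r * (1 / (1 + r ^ 2))) r := by
    intro r
    refine ((((hasDerivAt_pow 2 r).const_add 1).log (by positivity)).div_const 2).congr_deriv ?_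
    simp only [Nat.cast_ofNat, Nat.add_one_sub_one, pow_one]
    ring
  have hcont : Continuous fun r : ℝ => r * (1 / (1 + r ^ 2)) := by
    fun_prop (disch := intro r; positivity)
  calc ∫ w in closedBall (0 : ℂ) M, 1 / (1 + ‖w‖ ^ 2)
      = 2 * (π * ∫ r in Ioi (0 : ℝ), (Iic M).indicator (fun r => r * (1 / (1 + r ^ 2))) r) := by
        rw [← integral_indicator measurableSet_closedBall]
        simp_rw [hradial]
        rw [integral_fun_norm_addHaar volume]
        have hball : volume.real (ball (0 : ℂ) 1) = π := by simp [measureReal_def]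
        rw [hball, Complex.finrank_real_complex, nsmul_eq_mul, smul_eq_mul, Nat.cast_ofNat]
        congr 3
        ext r
        by_cases hr : r ≤ M <;> simp [hr]
    _ = 2 * (π * ∫ r in (0 : ℝ)..M, r * (1 / (1 + r ^ 2))) := by
        rw [setIntegral_indicator measurableSet_Iic, Ioi_inter_Iic,
          ← intervalIntegral.integral_of_le hM]
    _ = π * log (1 + M ^ 2) := by
        rw [intervalIntegral.integral_eq_sub_of_hasDerivAt (fun r _ => hprim r)
          (hcont.intervalIntegrable _ _)]
        simp only [zero_pow two_ne_zero, add_zero, log_one, zero_div, sub_zero]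
        ring

end Area

section LogKernel

variable {c w z : ℂ} {R : ℝ}

lemma norm_herglotzRieszKernel_sq (h : ‖w - c‖ ≠ ‖z - c‖) :
    ‖herglotzRieszKernel c w z‖ ^ 2 =
      2 * (‖z - c‖ ^ 2 + ‖w - c‖ ^ 2) / (‖z - c‖ ^ 2 - ‖w - c‖ ^ 2) * poissonKernel c w z - 1 := by
  rw [herglotzRieszKernel, poissonKernel]
  generalize z - c = a at *
  generalize w - c = b at *
  have hab : ‖a - b‖ ≠ 0 := norm_ne_zero_iff.2 (sub_ne_zero.2 fun hab => h (by rw [hab]))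
  have hsq : ‖a‖ ^ 2 - ‖b‖ ^ 2 ≠ 0 := sub_ne_zero.2 fun hsq =>
    h ((sq_eq_sq₀ (norm_nonneg b) (norm_nonneg a)).1 hsq.symm)
  have hpar := parallelogram_law_with_norm ℝ a b
  rw [norm_div]
  field_simp
  linarith

lemma circleAverage_norm_herglotzRieszKernel_sq (hw : w ∈ ball c R) :
    circleAverage (fun z => ‖herglotzRieszKernel c w z‖ ^ 2) c R =
      1 + 4 * ‖w - c‖ ^ 2 / (R ^ 2 - ‖w - c‖ ^ 2) := by
  have hR : |R| = R := abs_of_pos (pos_of_mem_ball hw)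
  rw [mem_ball_iff_norm] at hw
  have hden : R ^ 2 - ‖w - c‖ ^ 2 ≠ 0 := by nlinarith [norm_nonneg (w - c)]
  have hcongr : EqOn (fun z => ‖herglotzRieszKernel c w z‖ ^ 2)
      (fun z => poissonKernel c w z *
        (2 * (R ^ 2 + ‖w - c‖ ^ 2) / (R ^ 2 - ‖w - c‖ ^ 2)) + -1) (sphere c |R|) := by
    intro z hz
    rw [hR, mem_sphere_iff_norm] at hz
    simp only
    rw [norm_herglotzRieszKernel_sq (by rw [hz]; exact hw.ne), hz]
    ring
  have hball : w ∈ ball c R := mem_ball_iff_norm.2 hw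
  rw [circleAverage_congr_sphere hcongr, circleAverage_fun_add
    (circleIntegrable_poissonKernel_mul hball continuousOn_const) (circleIntegrable_const _ _ _)]
  rw [circleAverage_poissonKernel_mul_const hball, circleAverage_const]
  field_simp
  ring

/-- The kernel `(1 + conj w * exp ζ) / (1 - conj w * exp ζ)`, the test function in Green's identity
in logarithmic coordinates. It is holomorphic for `ζ.re ≤ 0`, and its real part at `x + y * I` is
the Poisson kernel of the unit disc with pole `exp x * w` at the boundary point `exp (y * I)`. -/
def logKernel (w ζ : ℂ) : ℂ := herglotzRieszKernel 0 (conj w * Complex.exp ζ) 1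

lemma exp_add_mul_I (x y : ℝ) : Complex.exp (x + y * Complex.I) = exp x * circleMap 0 1 y := by
  simp [Complex.exp_add, circleMap]

lemma logKernel_add_mul_I (w : ℂ) (x y : ℝ) :
    logKernel w (x + y * Complex.I) =
      conj (herglotzRieszKernel 0 (exp x * w) (circleMap 0 1 y)) := by
  have hz : conj (circleMap 0 1 y) ≠ 0 := by simp
  have hunit : circleMap 0 1 y * conj (circleMap 0 1 y) = 1 := by simp [Complex.mul_conj']
  simp only [logKernel, herglotzRieszKernel, exp_add_mul_I, sub_zero, map_div₀, map_add, map_sub,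
    map_mul, Complex.conj_ofReal]
  rw [← mul_div_mul_right _ _ hz]
  congr 1
  · linear_combination conj w * exp x * hunit
  · linear_combination -conj w * exp x * hunit

lemma exp_mul_mem_ball (hw : w ∈ ball 0 R) {x : ℝ} (hx : x ≤ 0) : exp x * w ∈ ball 0 R := by
  rw [mem_ball_zero_iff] at hw ⊢
  rw [norm_mul, Complex.norm_of_nonneg (exp_pos x).le]
  exact (mul_le_of_le_one_left (norm_nonneg w) (exp_le_one_iff.2 hx)).trans_lt hw

lemma integral_norm_logKernel_sq (hw : w ∈ ball 0 1) {x : ℝ} (hx : x ≤ 0) :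
    ∫ y in (0 : ℝ)..2 * π, ‖logKernel w (x + y * Complex.I)‖ ^ 2 =
      2 * π * (1 + 4 * (exp x * ‖w‖) ^ 2 / (1 - (exp x * ‖w‖) ^ 2)) := by
  have havg := circleAverage_norm_herglotzRieszKernel_sq (exp_mul_mem_ball hw hx)
  rw [circleAverage_def, smul_eq_mul, inv_mul_eq_iff_eq_mul₀ two_pi_pos.ne'] at havg
  simpa [logKernel_add_mul_I] using havg

lemma integral_one_add_four_mul_exp_le {a r : ℝ} (ha : a ≤ 0) (hr : 0 ≤ r) (hr1 : r < 1) :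
    ∫ x in a..0, (1 + 4 * (exp x * r) ^ 2 / (1 - (exp x * r) ^ 2)) ≤
      -a + 2 * log (1 / (1 - r ^ 2)) := by
  have hpos : ∀ x ≤ 0, 0 < 1 - (exp x * r) ^ 2 := fun x hx => by
    have : exp x * r < 1 := (mul_le_of_le_one_left hr (exp_le_one_iff.2 hx)).trans_lt hr1
    have : 0 ≤ exp x * r := by positivity
    nlinarith
  have hmem : ∀ x ∈ uIcc a 0, x ≤ 0 := fun x hx => (uIcc_of_le ha ▸ hx).2
  have hprim : ∀ x ∈ uIcc a 0, HasDerivAt (fun x => x - 2 * log (1 - (exp x * r) ^ 2))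
      (1 + 4 * (exp x * r) ^ 2 / (1 - (exp x * r) ^ 2)) x := fun x hx => by
    have hlog := ((((hasDerivAt_exp x).mul_const r).pow 2).const_sub 1).log (hpos x (hmem x hx)).ne'
    refine ((hasDerivAt_id x).sub (hlog.const_mul 2)).congr_deriv ?_
    simp only [Nat.cast_ofNat, Nat.add_one_sub_one, pow_one, Pi.pow_apply]
    ring
  have hcont : ContinuousOn (fun x => 1 + 4 * (exp x * r) ^ 2 / (1 - (exp x * r) ^ 2))
      (uIcc a 0) :=
    continuousOn_const.add
      (ContinuousOn.div (by fun_prop) (by fun_prop) fun x hx => (hpos x (hmem x hx)).ne')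
  rw [intervalIntegral.integral_eq_sub_of_hasDerivAt hprim hcont.intervalIntegrable, exp_zero,
    one_mul, one_div, log_inv]
  have : log (1 - (exp a * r) ^ 2) ≤ 0 :=
    log_nonpos (hpos a ha).le (sub_le_self 1 (sq_nonneg _))
  linarith

lemma differentiableAt_logKernel (hw : w ∈ ball 0 1) {ζ : ℂ} (hζ : ζ.re ≤ 0) :
    DifferentiableAt ℂ (logKernel w) ζ := by
  have hnorm : ‖conj w * Complex.exp ζ‖ < 1 := by
    rw [norm_mul, Complex.norm_conj, Complex.norm_exp]
    exact (mul_le_of_le_one_right (norm_nonneg w) (exp_le_one_iff.2 hζ)).trans_lt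
      (mem_ball_zero_iff.1 hw)
  have hden : 1 - conj w * Complex.exp ζ ≠ 0 :=
    sub_ne_zero.2 fun h => by simp [← h] at hnorm
  have hK : logKernel w = fun ζ => (1 + conj w * Complex.exp ζ) / (1 - conj w * Complex.exp ζ) := by
    ext ζ
    simp [logKernel, herglotzRieszKernel]
  rw [hK]
  fun_prop (disch := exact hden)

end LogKernel

section Energy

variable {g : ℂ → ℂ} {z : ℂ}

lemma hasGradientAt_logPotential (hg : DifferentiableAt ℂ g z) :
    HasGradientAt (logPotential g) (conj (deriv g z) * g z / (1 + ‖g z‖ ^ 2 : ℝ)) z := by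
  rw [hasGradientAt_iff_hasFDerivAt]
  have hsq := (hg.hasDerivAt.hasFDerivAt.restrictScalars ℝ).norm_sq
  have hlog := ((hsq.const_add 1).log (by positivity)).mul_const (1 / 2 : ℝ)
  refine (hlog.congr_fderiv ?_).congr_of_eventuallyEq (.of_forall fun ζ => by
    simp [logPotential, div_eq_mul_inv])
  ext v
  have hinner : inner ℝ (conj (deriv g z) * g z / (1 + ‖g z‖ ^ 2 : ℝ)) v =
      (1 + ‖g z‖ ^ 2)⁻¹ * inner ℝ (g z) (v * deriv g z) := by
    rw [Complex.inner, Complex.inner, ← Complex.re_ofReal_mul]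
    congr 1
    simp only [map_div₀, map_mul, Complex.conj_conj, Complex.conj_ofReal, Complex.ofReal_inv]
    ring
  rw [InnerProductSpace.toDual_apply_apply, hinner]
  simp only [smul_apply, ContinuousLinearMap.comp_apply, ContinuousLinearMap.coe_restrictScalars',
    ContinuousLinearMap.toSpanSingleton_apply, smul_eq_mul, coe_innerSL_apply, nsmul_eq_mul,
    Nat.cast_ofNat]
  ring

lemma gradient_logPotential (hg : DifferentiableAt ℂ g z) :
    gradient (logPotential g) z = conj (deriv g z) * g z / (1 + ‖g z‖ ^ 2 : ℝ) :=
  (hasGradientAt_logPotential hg).gradient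

lemma continuousOn_gradient_logPotential {s : Set ℂ} (hg : AnalyticOnNhd ℂ g s) :
    ContinuousOn (gradient (logPotential g)) s := by
  have hderiv : ContinuousOn (deriv g) s := hg.deriv.continuousOn
  have hcont : ContinuousOn g s := hg.continuousOn
  refine ContinuousOn.congr ?_ fun z hz => gradient_logPotential (hg z hz).differentiableAt
  refine ContinuousOn.div (by fun_prop) (by fun_prop) fun z _ => ?_
  exact Complex.ofReal_ne_zero.2 (by positivity)

lemma norm_gradient_logPotential_sq_le (hg : DifferentiableAt ℂ g z) :
    ‖gradient (logPotential g) z‖ ^ 2 ≤ ‖deriv g z‖ ^ 2 * (1 / (1 + ‖g z‖ ^ 2)) := by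
  rw [gradient_logPotential hg, norm_div, norm_mul, Complex.norm_conj,
    Complex.norm_of_nonneg (by positivity), div_pow, mul_pow, mul_div_assoc]
  refine mul_le_mul_of_nonneg_left ?_ (sq_nonneg _)
  rw [div_le_div_iff₀ (by positivity) (by positivity)]
  nlinarith [sq_nonneg ‖g z‖]

/-- The Dirichlet energy is at most `p` times the integral of `1 / (1 + ‖w‖²)` over the disc that
contains the image. -/
theorem setIntegral_norm_gradient_logPotential_sq_le {U : Set ℂ} {p : ℕ} {M : ℝ} (hU : IsOpen U)
    (hg : DifferentiableOn ℂ g U) (hp : PValentOn g U p) (hM : 0 ≤ M) (hgM : ∀ z ∈ U, ‖g z‖ ≤ M) :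
    ∫ z in U, ‖gradient (logPotential g) z‖ ^ 2 ≤ p * (π * log (1 + M ^ 2)) := by
  let φ : ℂ → ENNReal := (closedBall 0 M).indicator fun w => ENNReal.ofReal (1 / (1 + ‖w‖ ^ 2))
  have hφ : Measurable φ := Measurable.indicator (by fun_prop) measurableSet_closedBall
  have hφint : ∫⁻ w, φ w = ENNReal.ofReal (π * log (1 + M ^ 2)) := by
    have hcont : Continuous fun w : ℂ => 1 / (1 + ‖w‖ ^ 2) := by
      fun_prop (disch := intro w; positivity)
    rw [lintegral_indicator measurableSet_closedBall,
      ← setIntegral_closedBall_one_div_one_add_norm_sq hM, ofReal_integral_eq_lintegral_ofReal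
        (hcont.continuousOn.integrableOn_compact (isCompact_closedBall 0 M))
        (.of_forall fun w => by positivity)]
  have hgU : AnalyticOnNhd ℂ g U := hg.analyticOnNhd hU
  have hbound : ∀ z ∈ U, ENNReal.ofReal (‖gradient (logPotential g) z‖ ^ 2) ≤
      ‖deriv g z‖ₑ ^ 2 * φ (g z) := fun z hz => by
    simp only [φ]
    rw [indicator_of_mem (mem_closedBall_zero_iff.2 (hgM z hz)), ← ofReal_norm,
      ← ENNReal.ofReal_pow (norm_nonneg _), ← ENNReal.ofReal_mul (by positivity)]
    exact ENNReal.ofReal_le_ofReal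
      (norm_gradient_logPotential_sq_le (hgU z hz).differentiableAt)
  have hlog : 0 ≤ log (1 + M ^ 2) := log_nonneg (by nlinarith)
  have hmeas : AEStronglyMeasurable (fun z => ‖gradient (logPotential g) z‖ ^ 2)
      (volume.restrict U) :=
    ((continuousOn_gradient_logPotential hgU).norm.pow 2).aestronglyMeasurable hU.measurableSet
  rw [integral_eq_lintegral_of_nonneg_ae (.of_forall fun z => by positivity) hmeas]
  refine ENNReal.toReal_le_of_le_ofReal (by positivity) ?_
  calc ∫⁻ z in U, ENNReal.ofReal (‖gradient (logPotential g) z‖ ^ 2)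
      ≤ ∫⁻ z in U, ‖deriv g z‖ₑ ^ 2 * φ (g z) := setLIntegral_mono' hU.measurableSet hbound
    _ ≤ p * ∫⁻ w, φ w := lintegral_enorm_deriv_sq_mul_comp_le hU hg hp hφ
    _ = ENNReal.ofReal (p * (π * log (1 + M ^ 2))) := by
      rw [hφint, ENNReal.ofReal_mul (Nat.cast_nonneg p), ENNReal.ofReal_natCast]

lemma injOn_exp_reProdIm (s : Set ℝ) (a : ℝ) :
    InjOn Complex.exp (s ×ℂ Ico a (a + 2 * π)) := by
  intro u hu v hv huv
  obtain ⟨n, hn⟩ := Complex.exp_eq_exp_iff_exists_int.1 huv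
  have him : u.im - v.im = n * (2 * π) := by simp [hn]
  have hlt : |u.im - v.im| < 2 * π := by
    rw [abs_lt]
    constructor <;> linarith [hu.2.1, hu.2.2, hv.2.1, hv.2.2]
  have hn0 : n = 0 := by
    rw [him, abs_mul, abs_of_pos two_pi_pos, mul_lt_iff_lt_one_left two_pi_pos] at hlt
    exact Int.abs_lt_one_iff.1 (by exact_mod_cast hlt)
  simp [hn, hn0]

lemma exp_mem_ball_zero_one {ζ : ℂ} (hζ : ζ.re < 0) : Complex.exp ζ ∈ ball (0 : ℂ) 1 := by
  rwa [mem_ball_zero_iff, Complex.norm_exp, exp_lt_one_iff]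

lemma exp_mem_closedBall_zero_one {ζ : ℂ} (hζ : ζ.re ≤ 0) :
    Complex.exp ζ ∈ closedBall (0 : ℂ) 1 := by
  rwa [mem_closedBall_zero_iff, Complex.norm_exp, exp_le_one_iff]

end Energy

section Rectangle

variable {a b c d : ℝ}

lemma integrableOn_Ioo_reProdIm_of_continuousOn {E : Type*} [NormedAddCommGroup E] {g : ℂ → E}
    (hg : ContinuousOn g (Icc a b ×ℂ Icc c d)) : IntegrableOn g (Ioo a b ×ℂ Ioo c d) :=
  (hg.integrableOn_compact (isCompact_Icc.reProdIm isCompact_Icc)).mono_set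
    fun _ hζ => ⟨Ioo_subset_Icc_self hζ.1, Ioo_subset_Icc_self hζ.2⟩

lemma integral_integral_eq_setIntegral_reProdIm {E : Type*} [NormedAddCommGroup E]
    [NormedSpace ℝ E] {g : ℂ → E} (hab : a ≤ b) (hcd : c ≤ d)
    (hg : IntegrableOn g (Ioo a b ×ℂ Ioo c d)) :
    ∫ x in a..b, ∫ y in c..d, g (x + y * Complex.I) = ∫ ζ in Ioo a b ×ℂ Ioo c d, g ζ := by
  have hpreserve := Complex.volume_preserving_equiv_real_prod.symm
  have hembed := Complex.measurableEquivRealProd.symm.measurableEmbedding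
  have hpre : Complex.measurableEquivRealProd.symm ⁻¹' (Ioo a b ×ℂ Ioo c d) =
      Ioo a b ×ˢ Ioo c d := by
    ext q
    simp [Complex.mem_reProdIm, Complex.measurableEquivRealProd]
  have hintegrable := (hpreserve.integrableOn_comp_preimage hembed).2 hg
  rw [hpre] at hintegrable
  rw [← hpreserve.setIntegral_preimage_emb hembed, hpre, Measure.volume_eq_prod,
    setIntegral_prod (fun q => g (Complex.measurableEquivRealProd.symm q)) hintegrable,
    intervalIntegral.integral_of_le hab, integral_Ioc_eq_integral_Ioo]
  simp only [intervalIntegral.integral_of_le hcd, integral_Ioc_eq_integral_Ioo,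
    Complex.measurableEquivRealProd_symm_apply, Complex.mk_eq_add_mul_I]

lemma I_smul_fderiv_one_sub_fderiv_I {u : ℂ → ℝ} {k : ℂ → ℂ} {ζ v : ℂ} (hu : HasGradientAt u v ζ)
    (hk : DifferentiableAt ℂ k ζ) :
    Complex.I • fderiv ℝ (fun ζ => u ζ * k ζ) ζ 1 - fderiv ℝ (fun ζ => u ζ * k ζ) ζ Complex.I =
      Complex.I * (k ζ * v) := by
  have hofReal : HasFDerivAt (fun ζ => (u ζ : ℂ)) _ ζ :=
    Complex.ofRealCLM.hasFDerivAt.comp ζ hu.hasFDerivAt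
  rw [(hofReal.fun_mul (hk.hasDerivAt.hasFDerivAt.restrictScalars ℝ)).fderiv]
  simp only [Complex.coe_smul, add_apply, smul_apply, ContinuousLinearMap.coe_restrictScalars',
    ContinuousLinearMap.toSpanSingleton_apply, smul_eq_mul, one_mul, Complex.real_smul,
    ContinuousLinearMap.comp_apply, InnerProductSpace.toDual_apply_apply, Complex.inner,
    Complex.conj_re, Complex.ofRealCLM_apply, Complex.mul_re, Complex.I_re, zero_mul, Complex.I_im,
    Complex.conj_im, mul_neg, sub_neg_eq_add, zero_add]
  linear_combination Complex.I * k ζ * Complex.re_add_im v - k ζ * v.im * Complex.I_sq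

/-- Green's identity for a product of a real function and a holomorphic one: only the gradient of
the real factor contributes, because the holomorphic factor is annihilated by `∂̄`. -/
theorem integral_vertical_sub_eq_integral_mul_gradient {u : ℂ → ℝ} {k v : ℂ → ℂ}
    (hu : ∀ ζ ∈ uIcc a b ×ℂ uIcc c d, HasGradientAt u (v ζ) ζ)
    (hv : ContinuousOn v (uIcc a b ×ℂ uIcc c d))
    (hk : ∀ ζ ∈ uIcc a b ×ℂ uIcc c d, DifferentiableAt ℂ k ζ)
    (hper : ∀ x : ℝ, u (x + d * Complex.I) * k (x + d * Complex.I) =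
      u (x + c * Complex.I) * k (x + c * Complex.I)) :
    (∫ y in c..d, u (b + y * Complex.I) * k (b + y * Complex.I)) -
        ∫ y in c..d, u (a + y * Complex.I) * k (a + y * Complex.I) =
      ∫ x in a..b, ∫ y in c..d, k (x + y * Complex.I) * v (x + y * Complex.I) := by
  let F : ℂ → ℂ := fun ζ => u ζ * k ζ
  have hF : ∀ ζ ∈ uIcc a b ×ℂ uIcc c d, HasFDerivAt F (fderiv ℝ F ζ) ζ := fun ζ hζ =>
    DifferentiableAt.hasFDerivAt <| (Complex.ofRealCLM.differentiableAt.comp ζ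
      (hu ζ hζ).differentiableAt).mul ((hk ζ hζ).restrictScalars ℝ)
  have hdbar : ∀ ζ ∈ uIcc a b ×ℂ uIcc c d,
      Complex.I • fderiv ℝ F ζ 1 - fderiv ℝ F ζ Complex.I = Complex.I * (k ζ * v ζ) :=
    fun ζ hζ => I_smul_fderiv_one_sub_fderiv_I (hu ζ hζ) (hk ζ hζ)
  have hkc : ContinuousOn k (uIcc a b ×ℂ uIcc c d) :=
    fun ζ hζ => (hk ζ hζ).continuousAt.continuousWithinAt
  have hcompact : IsCompact (uIcc a b ×ℂ uIcc c d) := isCompact_uIcc.reProdIm isCompact_uIcc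
  have hstokes := Complex.integral_boundary_rect_of_hasFDerivAt_real_off_countable F (fderiv ℝ F)
    ⟨a, c⟩ ⟨b, d⟩ ∅ countable_empty (fun ζ hζ => (hF ζ hζ).continuousAt.continuousWithinAt)
    (fun ζ hζ => hF ζ ⟨Ioo_subset_Icc_self hζ.1.1, Ioo_subset_Icc_self hζ.1.2⟩)
    (((continuousOn_const.mul (hkc.mul hv)).integrableOn_compact hcompact).congr_fun
      (fun ζ hζ => (hdbar ζ hζ).symm) hcompact.measurableSet)
  have hinner : ∫ x in a..b, ∫ y in c..d, (Complex.I • fderiv ℝ F (x + y * Complex.I) 1 -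
      fderiv ℝ F (x + y * Complex.I) Complex.I) =
      Complex.I * ∫ x in a..b, ∫ y in c..d, k (x + y * Complex.I) * v (x + y * Complex.I) := by
    simp_rw [← intervalIntegral.integral_const_mul]
    refine intervalIntegral.integral_congr fun x hx =>
      intervalIntegral.integral_congr fun y hy => ?_
    exact hdbar _ ⟨by simpa using hx, by simpa using hy⟩
  simp only [F, hper, sub_self, zero_add] at hstokes
  rw [hinner] at hstokes
  simp only [smul_eq_mul] at hstokes
  rw [← mul_sub] at hstokes
  exact mul_left_cancel₀ Complex.I_ne_zero hstokes

end Rectangle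

section GreenEstimate

lemma norm_integral_mul_le_half_add {X : Type*} [MeasurableSpace X] {μ : Measure X} {k v : X → ℂ}
    {t : ℝ} (ht : 0 < t) (hk : Integrable (fun x => ‖k x‖ ^ 2) μ)
    (hv : Integrable (fun x => ‖v x‖ ^ 2) μ) :
    ‖∫ x, k x * v x ∂μ‖ ≤ (t * ∫ x, ‖k x‖ ^ 2 ∂μ + t⁻¹ * ∫ x, ‖v x‖ ^ 2 ∂μ) / 2 := by
  have hpointwise : ∀ x, ‖k x * v x‖ ≤ (t * ‖k x‖ ^ 2 + t⁻¹ * ‖v x‖ ^ 2) / 2 := fun x => by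
    have hsq : 0 ≤ t⁻¹ * (t * ‖k x‖ - ‖v x‖) ^ 2 := by positivity
    have hexpand : t⁻¹ * (t * ‖k x‖ - ‖v x‖) ^ 2 =
        t * ‖k x‖ ^ 2 + t⁻¹ * ‖v x‖ ^ 2 - 2 * (‖k x‖ * ‖v x‖) := by
      field_simp
      ring
    rw [norm_mul]
    linarith
  refine (norm_integral_le_of_norm_le (((hk.const_mul t).add (hv.const_mul t⁻¹)).div_const 2)
    (.of_forall hpointwise)).trans_eq ?_
  simp only [Pi.add_apply]
  rw [integral_div, integral_add (hk.const_mul t) (hv.const_mul t⁻¹), integral_const_mul,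
    integral_const_mul]

variable {f : ℂ → ℂ} {w : ℂ} {p : ℕ} {a M : ℝ}

lemma continuousOn_logKernel (hw : w ∈ ball 0 1) : ContinuousOn (logKernel w) {ζ | ζ.re ≤ 0} :=
  fun _ hζ => (differentiableAt_logKernel hw hζ).continuousAt.continuousWithinAt

lemma analyticOnNhd_comp_exp (hf : AnalyticOnNhd ℂ f (closedBall 0 1)) :
    AnalyticOnNhd ℂ (f ∘ Complex.exp) {ζ | ζ.re ≤ 0} :=
  fun _ hζ => (hf _ (exp_mem_closedBall_zero_one hζ)).comp analyticAt_cexp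

lemma setIntegral_norm_logKernel_sq_le (hw : w ∈ ball 0 1) (ha : a ≤ 0) :
    ∫ ζ in Ioo a 0 ×ℂ Ioo 0 (2 * π), ‖logKernel w ζ‖ ^ 2 ≤
      2 * π * (-a + 2 * log (1 / (1 - ‖w‖ ^ 2))) := by
  have hintegrable : IntegrableOn (fun ζ => ‖logKernel w ζ‖ ^ 2) (Ioo a 0 ×ℂ Ioo 0 (2 * π)) :=
    integrableOn_Ioo_reProdIm_of_continuousOn
      (((continuousOn_logKernel hw).mono fun _ hζ => hζ.1.2).norm.pow 2)
  calc ∫ ζ in Ioo a 0 ×ℂ Ioo 0 (2 * π), ‖logKernel w ζ‖ ^ 2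
      = ∫ x in a..0, ∫ y in (0 : ℝ)..2 * π, ‖logKernel w (x + y * Complex.I)‖ ^ 2 :=
        (integral_integral_eq_setIntegral_reProdIm ha two_pi_pos.le hintegrable).symm
    _ = ∫ x in a..0, 2 * π * (1 + 4 * (exp x * ‖w‖) ^ 2 / (1 - (exp x * ‖w‖) ^ 2)) :=
        intervalIntegral.integral_congr fun x hx =>
          integral_norm_logKernel_sq hw (uIcc_of_le ha ▸ hx).2
    _ ≤ 2 * π * (-a + 2 * log (1 / (1 - ‖w‖ ^ 2))) := by
        rw [intervalIntegral.integral_const_mul]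
        exact mul_le_mul_of_nonneg_left (integral_one_add_four_mul_exp_le ha (norm_nonneg w)
          (mem_ball_zero_iff.1 hw)) two_pi_pos.le

lemma setIntegral_norm_gradient_logPotential_comp_exp_sq_le
    (hf : DifferentiableOn ℂ f (ball 0 1)) (hp : PValentOn f (ball 0 1) p) (hM : 0 ≤ M)
    (hfM : ∀ z ∈ ball 0 1, ‖f z‖ ≤ M) :
    ∫ ζ in Ioo a 0 ×ℂ Ioo 0 (2 * π), ‖gradient (logPotential (f ∘ Complex.exp)) ζ‖ ^ 2 ≤
      p * (π * log (1 + M ^ 2)) := by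
  have hmaps : MapsTo Complex.exp (Ioo a 0 ×ℂ Ioo 0 (2 * π)) (ball 0 1) :=
    fun ζ hζ => exp_mem_ball_zero_one hζ.1.2
  have hinj : InjOn Complex.exp (Ioo a 0 ×ℂ Ioo 0 (2 * π)) :=
    (injOn_exp_reProdIm (Ioo a 0) 0).mono fun ζ hζ =>
      Complex.mem_reProdIm.2 ⟨hζ.1, by simpa only [zero_add] using Ioo_subset_Ico_self hζ.2⟩
  exact setIntegral_norm_gradient_logPotential_sq_le (isOpen_Ioo.reProdIm isOpen_Ioo)
    (hf.comp Complex.differentiable_exp.differentiableOn hmaps) (hp.comp_injOn hinj hmaps) hM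
    fun ζ hζ => hfM _ (hmaps hζ)

lemma re_integral_comp_exp_mul_logKernel {h : ℂ → ℝ} {x : ℝ} (hw : w ∈ ball 0 1) (hx : x ≤ 0)
    (hh : ContinuousOn h (sphere 0 (exp x))) :
    (∫ y in (0 : ℝ)..2 * π, (h (Complex.exp (x + y * Complex.I)) : ℂ) *
        logKernel w (x + y * Complex.I)).re =
      2 * π * circleAverage (fun z => poissonKernel 0 (exp x * w) z * h (exp x * z)) 0 1 := by
  have hline : Continuous fun y : ℝ => (x + y * Complex.I : ℂ) := by fun_prop
  have hcont_h : Continuous fun y : ℝ => (h (Complex.exp (x + y * Complex.I)) : ℂ) :=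
    Complex.continuous_ofReal.comp <| hh.comp_continuous (Complex.continuous_exp.comp hline)
      fun y => by simp [Complex.norm_exp]
  have hcont_K : Continuous fun y : ℝ => logKernel w (x + y * Complex.I) :=
    (continuousOn_logKernel hw).comp_continuous hline fun y => by simpa using hx
  rw [← Complex.reCLM_apply, ← Complex.reCLM.intervalIntegral_comp_comm
    ((hcont_h.fun_mul hcont_K).intervalIntegrable _ _), circleAverage_def, smul_eq_mul,
    mul_inv_cancel_left₀ two_pi_pos.ne']
  refine intervalIntegral.integral_congr fun y _ => ?_
  simp only [Complex.reCLM_apply, Complex.re_ofReal_mul, logKernel_add_mul_I, Complex.conj_re,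
    exp_add_mul_I, poissonKernel_eq_re_herglotzRieszKernel, Function.comp_apply]
  exact mul_comm _ _

lemma norm_setIntegral_logKernel_mul_gradient_le (hf : AnalyticOnNhd ℂ f (closedBall 0 1))
    (hp : PValentOn f (ball 0 1) p) (hM : 0 ≤ M) (hfM : ∀ z ∈ ball 0 1, ‖f z‖ ≤ M) (ha : a ≤ 0)
    (hw : w ∈ ball 0 1) :
    ‖∫ ζ in Ioo a 0 ×ℂ Ioo 0 (2 * π),
        logKernel w ζ * gradient (logPotential (f ∘ Complex.exp)) ζ‖ ≤
      π * (p * (-a + 2 * log (1 / (1 - ‖w‖ ^ 2))) + log (1 + M ^ 2) / 2) := by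
  have hppos : (0 : ℝ) < p := Nat.cast_pos.2 (hp.valency_pos ⟨w, hw⟩)
  have hgrad : ContinuousOn (gradient (logPotential (f ∘ Complex.exp)))
      (Icc a 0 ×ℂ Icc 0 (2 * π)) :=
    continuousOn_gradient_logPotential ((analyticOnNhd_comp_exp hf).mono fun ζ hζ => hζ.1.2)
  have hkernel : ContinuousOn (logKernel w) (Icc a 0 ×ℂ Icc 0 (2 * π)) :=
    (continuousOn_logKernel hw).mono fun ζ hζ => hζ.1.2
  refine (norm_integral_mul_le_half_add hppos
    (integrableOn_Ioo_reProdIm_of_continuousOn (hkernel.norm.pow 2))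
    (integrableOn_Ioo_reProdIm_of_continuousOn (hgrad.norm.pow 2))).trans ?_
  have henergyK := mul_le_mul_of_nonneg_left (setIntegral_norm_logKernel_sq_le hw ha) hppos.le
  have henergyf := mul_le_mul_of_nonneg_left (setIntegral_norm_gradient_logPotential_comp_exp_sq_le
    (a := a) (hf.differentiableOn.mono ball_subset_closedBall) hp hM hfM) (inv_pos.2 hppos).le
  rw [inv_mul_cancel_left₀ hppos.ne'] at henergyf
  linarith

lemma circleAverage_sub_circleAverage_eq_re_setIntegral (hf : AnalyticOnNhd ℂ f (closedBall 0 1))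
    (ha : a ≤ 0) (hw : w ∈ ball 0 1) :
    2 * π * (circleAverage (fun z => poissonKernel 0 w z * logPotential f z) 0 1 -
        circleAverage (fun z => poissonKernel 0 (exp a * w) z * logPotential f (exp a * z)) 0 1) =
      (∫ ζ in Ioo a 0 ×ℂ Ioo 0 (2 * π),
        logKernel w ζ * gradient (logPotential (f ∘ Complex.exp)) ζ).re := by
  have hcont : ContinuousOn (logPotential f) (closedBall 0 1) :=
    continuousOn_logPotential hf.continuousOn
  have hrect : Icc a 0 ×ℂ Icc 0 (2 * π) ⊆ {ζ | ζ.re ≤ 0} := fun ζ hζ => hζ.1.2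
  have hfexp := (analyticOnNhd_comp_exp hf).mono hrect
  have hgrad := continuousOn_gradient_logPotential hfexp
  have hkernel := (continuousOn_logKernel hw).mono hrect
  have houter := re_integral_comp_exp_mul_logKernel hw le_rfl
    (hcont.mono (sphere_subset_closedBall.trans_eq (by rw [exp_zero])))
  have hinner := re_integral_comp_exp_mul_logKernel hw ha
    (hcont.mono (sphere_subset_closedBall.trans
      (closedBall_subset_closedBall (exp_le_one_iff.2 ha))))
  simp only [exp_zero, Complex.ofReal_one, one_mul] at houter
  rw [mul_sub, ← houter, ← hinner, ← Complex.sub_re, ← integral_integral_eq_setIntegral_reProdIm ha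
    two_pi_pos.le (integrableOn_Ioo_reProdIm_of_continuousOn (hkernel.fun_mul hgrad)),
    ← integral_vertical_sub_eq_integral_mul_gradient (u := logPotential (f ∘ Complex.exp))]
  · rfl
  · rw [uIcc_of_le ha, uIcc_of_le two_pi_pos.le]
    exact fun ζ hζ => (hasGradientAt_logPotential
      (hfexp ζ hζ).differentiableAt).differentiableAt.hasGradientAt
  · rwa [uIcc_of_le ha, uIcc_of_le two_pi_pos.le]
  · rw [uIcc_of_le ha, uIcc_of_le two_pi_pos.le]
    exact fun ζ hζ => differentiableAt_logKernel hw (hrect hζ)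
  · exact fun x => by simp [logKernel, logPotential, Complex.exp_add, Complex.exp_two_pi_mul_I]

theorem logPotential_le_of_norm_le_one_on_sphere {β : ℝ} (hβ : 0 < β) (hβ1 : β ≤ 1)
    (hf : AnalyticOnNhd ℂ f (closedBall 0 1)) (hp : PValentOn f (ball 0 1) p)
    (hfβ : ∀ z ∈ sphere 0 β, ‖f z‖ ≤ 1) (hM : 0 ≤ M) (hfM : ∀ z ∈ ball 0 1, ‖f z‖ ≤ M)
    (hw : w ∈ ball 0 1) :
    logPotential f w ≤ log 2 / 2 + log (1 + M ^ 2) / 4 +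
      p / 2 * (log (1 / β) + 2 * log (1 / (1 - ‖w‖ ^ 2))) := by
  have hlogβ : log β ≤ 0 := log_nonpos hβ.le hβ1
  have hscale : ∀ z ∈ sphere (0 : ℂ) 1, (β * z : ℂ) ∈ sphere (0 : ℂ) β := fun z hz => by
    rw [mem_sphere_zero_iff_norm] at hz ⊢
    rw [norm_mul, hz, mul_one, Complex.norm_of_nonneg hβ.le]
  have houter : logPotential f w ≤
      circleAverage (fun z => poissonKernel 0 w z * logPotential f z) 0 1 :=
    logPotential_le_circleAverage_poissonKernel
      (hf.differentiableOn.mono closure_ball_subset_closedBall).diffContOnCl hw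
  have hinner : circleAverage
      (fun z => poissonKernel 0 (exp (log β) * w) z * logPotential f (exp (log β) * z)) 0 1 ≤
      log 2 / 2 := by
    refine circleAverage_poissonKernel_mul_le (exp_mul_mem_ball hw hlogβ) ?_ fun z hz => ?_
    · rw [exp_log hβ]
      exact (continuousOn_logPotential hf.continuousOn).comp (by fun_prop) fun z hz =>
        closedBall_subset_closedBall hβ1 (sphere_subset_closedBall (hscale z hz))
    · rw [exp_log hβ]
      exact (logPotential_le_of_norm_le (hfβ _ (hscale z hz))).trans_eq (by norm_num)
  have hgreen := circleAverage_sub_circleAverage_eq_re_setIntegral hf hlogβ hw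
  have henergy := (Complex.re_le_norm _).trans
    (norm_setIntegral_logKernel_mul_gradient_le hf hp hM hfM hlogβ hw)
  rw [← hgreen, mul_assoc, mul_left_comm, mul_le_mul_iff_right₀ pi_pos] at henergy
  rw [one_div β, log_inv]
  linarith

end GreenEstimate

section Disc

variable {f : ℂ → ℂ} {w : ℂ} {p : ℕ} {β : ℝ}

lemma norm_le_sqrt_of_logPotential_le {X E : Type*} [NormedAddCommGroup E] {f : X → E} {z : X}
    {L : ℝ} (h : logPotential f z ≤ L) : ‖f z‖ ≤ √(exp L ^ 2 - 1) := by
  refine le_sqrt_of_sq_le (le_sub_iff_add_le'.2 ?_)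
  rw [← exp_logPotential_sq f z]
  gcongr

lemma logPotential_le_half_add {R L : ℝ} (hβ : 0 < β) (hβR : β ≤ R)
    (hf : AnalyticOnNhd ℂ f (closedBall 0 R)) (hp : PValentOn f (ball 0 R) p)
    (hfβ : ∀ z ∈ sphere 0 β, ‖f z‖ ≤ 1) (hL : ∀ z ∈ ball 0 R, logPotential f z ≤ L)
    (hw : w ∈ ball 0 R) :
    logPotential f w ≤
      (L + log 2 + p * (log (R / β) + 2 * log (1 / (1 - (‖w‖ / R) ^ 2)))) / 2 := by
  have hR : 0 < R := hβ.trans_le hβR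
  have hRC : (R : ℂ) ≠ 0 := Complex.ofReal_ne_zero.2 hR.ne'
  have hnorm : ∀ u : ℂ, ‖R * u‖ = R * ‖u‖ := fun u => by
    rw [norm_mul, Complex.norm_of_nonneg hR.le]
  have hmaps : MapsTo (fun u : ℂ => R * u) (ball 0 1) (ball 0 R) := fun u hu => by
    rw [mem_ball_zero_iff] at hu ⊢
    rw [hnorm]
    exact mul_lt_of_lt_one_right hR hu
  have hanalytic : AnalyticOnNhd ℂ (f ∘ fun u : ℂ => R * u) (closedBall 0 1) := fun u hu => by
    refine (hf _ ?_).comp (by fun_prop)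
    rw [mem_closedBall_zero_iff] at hu ⊢
    rw [hnorm]
    exact mul_le_of_le_one_right hR.le hu
  have hL0 : 1 ≤ exp L ^ 2 :=
    one_le_pow₀ (one_le_exp ((logPotential_nonneg f w).trans (hL w hw)))
  have hwR : w / R ∈ ball (0 : ℂ) 1 := by
    rw [mem_ball_zero_iff] at hw ⊢
    rwa [norm_div, Complex.norm_of_nonneg hR.le, div_lt_one hR]
  have hunit := logPotential_le_of_norm_le_one_on_sphere (div_pos hβ hR) ((div_le_one hR).2 hβR)
    hanalytic (hp.comp_injOn (mul_right_injective₀ hRC).injOn hmaps) (fun u hu => hfβ _ (by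
      rw [mem_sphere_zero_iff_norm] at hu ⊢
      rw [hnorm, hu, mul_div_cancel₀ _ hR.ne'])) (sqrt_nonneg (exp L ^ 2 - 1))
    (fun u hu => norm_le_sqrt_of_logPotential_le (f := f) (hL _ (hmaps hu))) hwR
  have hscale : logPotential (f ∘ fun u : ℂ => R * u) (w / R) = logPotential f w := by
    simp only [logPotential, Function.comp_apply, mul_div_cancel₀ _ hRC]
  rw [hscale, sq_sqrt (sub_nonneg.2 hL0), add_sub_cancel, log_pow, log_exp, one_div_div, norm_div,
    Complex.norm_of_nonneg hR.le] at hunit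
  push_cast at hunit
  linarith

lemma sub_le_one_sub_div_sq {r R : ℝ} (hr : 0 ≤ r) (hrR : r < R) (hR : R ≤ 1) :
    R - r ≤ 1 - (r / R) ^ 2 := by
  have hR0 : 0 < R := hr.trans_lt hrR
  have hquot : r / R ≤ 1 := (div_le_one hR0).2 hrR.le
  have hmul : R * (r / R) = r := mul_div_cancel₀ r hR0.ne'
  nlinarith

lemma logPotential_le_half_add_of_le_one {r R L : ℝ} (hβ : 0 < β) (hβR : β ≤ R) (hrR : r < R)
    (hR : R < 1) (hf : AnalyticOnNhd ℂ f (ball 0 1)) (hp : PValentOn f (ball 0 1) p)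
    (hfβ : ∀ z ∈ sphere 0 β, ‖f z‖ ≤ 1) (hL : ∀ z ∈ ball 0 R, logPotential f z ≤ L)
    (hw : w ∈ closedBall 0 r) :
    logPotential f w ≤
      (L + (log 2 + p * log (1 / β) + 2 * p * log (1 / (R - r)))) / 2 := by
  have hwr : ‖w‖ ≤ r := mem_closedBall_zero_iff.1 hw
  have hgap : 0 < R - r := sub_pos.2 hrR
  have hsq : R - r ≤ 1 - (‖w‖ / R) ^ 2 :=
    (sub_le_sub_left hwr R).trans
      (sub_le_one_sub_div_sq (norm_nonneg w) (hwr.trans_lt hrR) hR.le)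
  have hlogβ : log (R / β) ≤ log (1 / β) :=
    log_le_log (div_pos (hβ.trans_le hβR) hβ) (by gcongr)
  have hloggap : log (1 / (1 - (‖w‖ / R) ^ 2)) ≤ log (1 / (R - r)) :=
    log_le_log (one_div_pos.2 (hgap.trans_le hsq)) (by gcongr)
  calc logPotential f w
      ≤ (L + log 2 + p * (log (R / β) + 2 * log (1 / (1 - (‖w‖ / R) ^ 2)))) / 2 :=
        logPotential_le_half_add hβ hβR (hf.mono (closedBall_subset_ball hR))
          (hp.mono (ball_subset_ball hR.le)) hfβ hL (closedBall_subset_ball hrR hw)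
    _ ≤ (L + log 2 + p * (log (1 / β) + 2 * log (1 / (R - r)))) / 2 := by gcongr
    _ = (L + (log 2 + p * log (1 / β) + 2 * p * log (1 / (R - r)))) / 2 := by ring

lemma log_one_div_midpoint_sub_add_log {r ρ : ℝ} (h : r < ρ) :
    log (1 / ((r + ρ) / 2 - r)) + log (4 / (ρ - (r + ρ) / 2)) = 2 * log (4 / (ρ - r)) := by
  have hgap : 0 < ρ - r := sub_pos.2 h
  rw [show (r + ρ) / 2 - r = (ρ - r) / 2 by ring, show ρ - (r + ρ) / 2 = (ρ - r) / 2 by ring,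
    two_mul, ← log_mul (by positivity) (by positivity), ← log_mul (by positivity) (by positivity)]
  congr 1
  field_simp
  norm_num

/-- The function `r ↦ S r - C - k * log (4 / (ρ - r))` is at most half its supremum. -/
lemma le_add_mul_log_of_le_half_add {S : ℝ → ℝ} {b ρ C k : ℝ} (hk : 0 ≤ k)
    (hbdd : BddAbove (S '' Ico b ρ))
    (hS : ∀ r ∈ Ico b ρ, ∀ R ∈ Ioo r ρ, S r ≤ (S R + (C + k * log (1 / (R - r)))) / 2) {r : ℝ}
    (hr : r ∈ Ico b ρ) : S r ≤ C + k * log (4 / (ρ - r)) := by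
  let T : ℝ → ℝ := fun r => S r - (C + k * log (4 / (ρ - r)))
  have hThalf : ∀ r ∈ Ico b ρ, T r ≤ T ((r + ρ) / 2) / 2 := fun r hr => by
    have hstep := hS r hr ((r + ρ) / 2) ⟨by linarith [hr.2], by linarith [hr.2]⟩
    have hlog := log_one_div_midpoint_sub_add_log hr.2
    simp only [T]
    linear_combination hstep + k / 2 * hlog
  have hTbdd : BddAbove (T '' Ico b ρ) := by
    obtain ⟨N, hN⟩ := hbdd
    refine ⟨N - (C + k * log (4 / (ρ - b))), ?_⟩
    rintro _ ⟨r, hr, rfl⟩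
    have hgap : 0 < ρ - r := sub_pos.2 hr.2
    have hgap' : ρ - r ≤ ρ - b := sub_le_sub_left hr.1 ρ
    have hlog : log (4 / (ρ - b)) ≤ log (4 / (ρ - r)) :=
      log_le_log (div_pos four_pos (hgap.trans_le hgap')) (by gcongr)
    exact sub_le_sub (hN ⟨r, hr, rfl⟩) (by gcongr)
  have hsup : sSup (T '' Ico b ρ) ≤ sSup (T '' Ico b ρ) / 2 := by
    refine csSup_le ⟨_, r, hr, rfl⟩ ?_
    rintro _ ⟨s, hs, rfl⟩
    have hmid : (s + ρ) / 2 ∈ Ico b ρ := ⟨by linarith [hs.1, hs.2], by linarith [hs.2]⟩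
    linarith [hThalf s hs, le_csSup hTbdd (mem_image_of_mem T hmid)]
  have hTr : T r ≤ 0 := by linarith [le_csSup hTbdd (mem_image_of_mem T hr)]
  exact sub_nonpos.1 hTr

lemma logPotential_le_of_pValentOn_of_norm_le_one {α : ℝ} (hβ : 0 < β) (hβα : β ≤ α) (hα : α < 1)
    (hf : AnalyticOnNhd ℂ f (ball 0 1)) (hp : PValentOn f (ball 0 1) p)
    (hfβ : ∀ z ∈ sphere 0 β, ‖f z‖ ≤ 1) (hw : w ∈ closedBall 0 α) :
    logPotential f w ≤ log 2 + p * log (1 / β) + 2 * p * log (8 / (1 - α)) := by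
  let S : ℝ → ℝ := fun r => sSup (logPotential f '' closedBall 0 r)
  let ρ : ℝ := (1 + α) / 2
  have hαρ : α < ρ := by simp only [ρ]; linarith
  have hρ1 : ρ < 1 := by simp only [ρ]; linarith
  have hbdd : ∀ r < 1, BddAbove (logPotential f '' closedBall 0 r) := fun r hr =>
    (isCompact_closedBall 0 r).bddAbove_image
      (continuousOn_logPotential (hf.continuousOn.mono (closedBall_subset_ball hr)))
  have hle : ∀ r < 1, ∀ z ∈ closedBall 0 r, logPotential f z ≤ S r := fun r hr z hz =>
    le_csSup (hbdd r hr) (mem_image_of_mem _ hz)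
  have hne : ∀ r ∈ Ico β ρ, (logPotential f '' closedBall 0 r).Nonempty := fun r hr =>
    (nonempty_closedBall.2 (hβ.le.trans hr.1)).image _
  have hSbdd : BddAbove (S '' Ico β ρ) := by
    refine ⟨S ρ, ?_⟩
    rintro _ ⟨r, hr, rfl⟩
    exact csSup_le_csSup (hbdd ρ hρ1) (hne r hr) (image_mono (closedBall_subset_closedBall hr.2.le))
  have hSstep : ∀ r ∈ Ico β ρ, ∀ R ∈ Ioo r ρ,
      S r ≤ (S R + (log 2 + p * log (1 / β) + 2 * p * log (1 / (R - r)))) / 2 := by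
    intro r hr R hR
    refine csSup_le (hne r hr) ?_
    rintro _ ⟨z, hz, rfl⟩
    have hR1 : R < 1 := hR.2.trans hρ1
    exact logPotential_le_half_add_of_le_one hβ (hr.1.trans hR.1.le) hR.1 hR1 hf hp hfβ
      (fun u hu => hle R hR1 u (ball_subset_closedBall hu)) hz
  have hSα := le_add_mul_log_of_le_half_add (by positivity) hSbdd hSstep ⟨hβα, hαρ⟩
  have hgap : 4 / (ρ - α) = 8 / (1 - α) := by
    rw [show ρ - α = (1 - α) / 2 by simp only [ρ]; ring, div_div_eq_mul_div]
    norm_num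
  rw [hgap] at hSα
  exact (hle α hα w hw).trans hSα

lemma norm_le_of_pValentOn_of_norm_le_one {α : ℝ} (hβ : 0 < β) (hβα : β ≤ α) (hα : α < 1)
    (hf : AnalyticOnNhd ℂ f (ball 0 1)) (hp : PValentOn f (ball 0 1) p)
    (hfβ : ∀ z ∈ sphere 0 β, ‖f z‖ ≤ 1) (hw : w ∈ closedBall 0 α) :
    ‖f w‖ ≤ 2 * (8 / (1 - α)) ^ (2 * p) / β ^ p := by
  have : 0 < 1 - α := sub_pos.2 hα
  have hconst : log 2 + p * log (1 / β) + 2 * p * log (8 / (1 - α)) =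
      log (2 * (8 / (1 - α)) ^ (2 * p) / β ^ p) := by
    rw [one_div, log_inv, log_div (x := 2 * _) (by positivity) (by positivity),
      log_mul two_ne_zero (by positivity), log_pow, log_pow]
    push_cast
    ring
  calc ‖f w‖ ≤ exp (logPotential f w) := norm_le_exp_logPotential f w
    _ ≤ exp (log (2 * (8 / (1 - α)) ^ (2 * p) / β ^ p)) := exp_le_exp.2
        (hconst ▸ logPotential_le_of_pValentOn_of_norm_le_one hβ hβα hα hf hp hfβ hw)
    _ = 2 * (8 / (1 - α)) ^ (2 * p) / β ^ p := exp_log (by positivity)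

theorem norm_le_mul_of_pValentOn_of_norm_le {α m : ℝ} (hβ : 0 < β) (hβα : β ≤ α) (hα : α < 1)
    (hf : AnalyticOnNhd ℂ f (ball 0 1)) (hp : PValentOn f (ball 0 1) p)
    (hfβ : ∀ z ∈ ball 0 β, ‖f z‖ ≤ m) (hw : w ∈ closedBall 0 α) :
    ‖f w‖ ≤ 2 * (8 / (1 - α)) ^ (2 * p) / β ^ p * m := by
  have : 0 < 1 - α := sub_pos.2 hα
  have hC : 0 < 2 * (8 / (1 - α)) ^ (2 * p) / β ^ p := by positivity
  have hm : 0 ≤ m := (norm_nonneg _).trans (hfβ 0 (mem_ball_self hβ))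
  have hcont : ContinuousOn f (closedBall 0 β) :=
    hf.continuousOn.mono (closedBall_subset_ball (hβα.trans_lt hα))
  have hsphere : ∀ z ∈ sphere 0 β, ‖f z‖ ≤ m := fun z hz => by
    rw [← closure_ball 0 hβ.ne'] at hcont
    refine le_on_closure hfβ hcont.norm continuousOn_const ?_
    exact closure_ball (0 : ℂ) hβ.ne' ▸ sphere_subset_closedBall hz
  rw [← div_le_iff₀' hC]
  refine le_of_forall_gt_imp_ge_of_dense fun m' hm' => ?_
  have hm0 : 0 < m' := hm.trans_lt hm'
  have hinj : Function.Injective fun u : ℂ => u / m' :=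
    fun _ _ => (div_left_inj' (Complex.ofReal_ne_zero.2 hm0.ne')).1
  have hnorm : ∀ z, ‖f z / m'‖ = ‖f z‖ / m' := fun z => by
    rw [norm_div, Complex.norm_of_nonneg hm0.le]
  have hdiv := norm_le_of_pValentOn_of_norm_le_one hβ hβα hα
    (hf.div analyticOnNhd_const fun _ _ => Complex.ofReal_ne_zero.2 hm0.ne')
    (hp.injective_comp hinj) (fun z hz => (hnorm z).trans_le
      ((div_le_one hm0).2 ((hsphere z hz).trans hm'.le))) hw
  rw [hnorm, div_le_iff₀ hm0] at hdiv
  exact (div_le_iff₀' hC).2 hdiv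

end Disc

section Ball

variable {E : Type*} [NormedAddCommGroup E] [NormedSpace ℂ E] {f : E → ℂ} {z z₀ b : E} {p : ℕ}
  {α β R : ℝ}

lemma add_smul_mem_ball_iff (hR : 0 < R) (hb : ‖b‖ = R) (t : ℂ) (s : ℝ) :
    z₀ + t • b ∈ ball z₀ (s * R) ↔ t ∈ ball 0 s := by
  rw [mem_ball_iff_norm, add_sub_cancel_left, norm_smul, hb, mul_lt_mul_iff_left₀ hR,
    mem_ball_zero_iff]

lemma exists_norm_eq_add_smul_eq (hR : 0 < R) (hz : z ≠ z₀) :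
    ∃ b : E, ‖b‖ = R ∧ ∃ t : ℂ, z₀ + t • b = z := by
  have hd : 0 < ‖z - z₀‖ := norm_sub_pos_iff.2 hz
  refine ⟨((R / ‖z - z₀‖ : ℝ) : ℂ) • (z - z₀), ?_, ((‖z - z₀‖ / R : ℝ) : ℂ), ?_⟩
  · rw [norm_smul, Complex.norm_of_nonneg (by positivity), div_mul_cancel₀ _ hd.ne']
  · rw [smul_smul, ← Complex.ofReal_mul, div_mul_div_cancel₀ hR.ne', div_self hd.ne',
      Complex.ofReal_one, one_smul, add_sub_cancel]

lemma norm_le_mul_of_pValentOn_line {m : ℝ} (hβ : 0 < β) (hβα : β ≤ α) (hα : α < 1) (hR : 0 < R)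
    (hb : ‖b‖ = R) (hf : AnalyticOnNhd ℂ f (ball z₀ R))
    (hp : PValentOn (fun t : ℂ => f (z₀ + t • b)) {t | z₀ + t • b ∈ ball z₀ R} p)
    (hm : ∀ z ∈ ball z₀ (β * R), ‖f z‖ ≤ m) {t : ℂ} (ht : t ∈ closedBall 0 α) :
    ‖f (z₀ + t • b)‖ ≤ 2 * (8 / (1 - α)) ^ (2 * p) / β ^ p * m := by
  have hmem : {t : ℂ | z₀ + t • b ∈ ball z₀ R} = ball 0 1 :=
    Set.ext fun t => by simpa only [one_mul, mem_ofPred_eq] using add_smul_mem_ball_iff hR hb t 1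
  rw [hmem] at hp
  refine norm_le_mul_of_pValentOn_of_norm_le (f := fun t => f (z₀ + t • b)) hβ hβα hα
    (fun t ht => ?_) hp (fun t ht => hm _ ((add_smul_mem_ball_iff hR hb t β).2 ht)) ht
  exact AnalyticAt.fun_comp (hf _ (hmem.ge ht)) (by fun_prop)

lemma two_mul_pow_le_doubling_constant (hα0 : 0 ≤ α) (hα : α < 1) (p : ℕ) :
    2 * (8 / (1 - α)) ^ (2 * p) ≤
      (p + 1) * α ^ p + 2 * 8 ^ (2 * p) / (1 - α) ^ (2 * p + 1) := by
  have hgap : 0 < 1 - α := sub_pos.2 hα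
  have hpow : (1 - α) ^ (2 * p + 1) ≤ (1 - α) ^ (2 * p) :=
    pow_le_pow_of_le_one hgap.le (by linarith) (Nat.le_succ _)
  calc 2 * (8 / (1 - α)) ^ (2 * p) = 2 * 8 ^ (2 * p) / (1 - α) ^ (2 * p) := by
        rw [div_pow, mul_div_assoc]
    _ ≤ 2 * 8 ^ (2 * p) / (1 - α) ^ (2 * p + 1) := by gcongr
    _ ≤ (p + 1) * α ^ p + 2 * 8 ^ (2 * p) / (1 - α) ^ (2 * p + 1) :=
        le_add_of_nonneg_left (by positivity)

lemma one_le_two_mul_pow_div_pow (hβ : 0 < β) (hβ1 : β ≤ 1) (hα0 : 0 ≤ α) (hα : α < 1) (p : ℕ) :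
    1 ≤ 2 * (8 / (1 - α)) ^ (2 * p) / β ^ p := by
  have hgap : 0 < 1 - α := sub_pos.2 hα
  have hbase : 1 ≤ 8 / (1 - α) := (one_le_div hgap).2 (by linarith)
  rw [one_le_div (by positivity)]
  linarith [pow_le_one₀ hβ.le hβ1 (n := p), one_le_pow₀ hbase (n := 2 * p)]

theorem doubling_pvalent_concentric_balls_general (hβ : 0 < β) (hβα : β ≤ α) (hα : α < 1)
    (hf : AnalyticOnNhd ℂ f (ball z₀ R))
    (hp : ∀ b ≠ 0, PValentOn (fun t : ℂ => f (z₀ + t • b)) {t | z₀ + t • b ∈ ball z₀ R} p)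
    (hbdd : BddAbove ((fun w => ‖f w‖) '' ball z₀ (β * R))) (hz : z ∈ ball z₀ (α * R)) :
    ‖f z‖ ≤ ((p + 1) * α ^ p + 2 * 8 ^ (2 * p) / (1 - α) ^ (2 * p + 1)) / β ^ p *
      sSup ((fun w => ‖f w‖) '' ball z₀ (β * R)) := by
  have hα0 : 0 < α := hβ.trans_le hβα
  have hR : 0 < R := pos_of_mul_pos_right (pos_of_mem_ball hz) hα0.le
  set S := sSup ((fun w => ‖f w‖) '' ball z₀ (β * R))
  have hS : ∀ w ∈ ball z₀ (β * R), ‖f w‖ ≤ S := fun w hw =>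
    le_csSup hbdd (mem_image_of_mem (fun w => ‖f w‖) hw)
  have hcenter : ‖f z₀‖ ≤ S := hS z₀ (mem_ball_self (by positivity))
  have hS0 : 0 ≤ S := (norm_nonneg _).trans hcenter
  suffices ‖f z‖ ≤ 2 * (8 / (1 - α)) ^ (2 * p) / β ^ p * S by
    refine this.trans ?_
    gcongr
    exact two_mul_pow_le_doubling_constant hα0.le hα p
  rcases eq_or_ne z z₀ with rfl | hne
  · exact hcenter.trans (le_mul_of_one_le_left hS0
      (one_le_two_mul_pow_div_pow hβ (hβα.trans hα.le) hα0.le hα p))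
  · obtain ⟨b, hb, t, rfl⟩ := exists_norm_eq_add_smul_eq hR hne
    exact norm_le_mul_of_pValentOn_line hβ hβα hα hR hb hf
      (hp b (norm_pos_iff.1 (hb ▸ hR))) hS
      (ball_subset_closedBall ((add_smul_mem_ball_iff hR hb t α).1 hz))

end Ball

lemma SectionallyPValentOn.pValentOn_line {n p : ℕ} {f : EuclideanSpace ℂ (Fin n) → ℂ}
    {W : Set (EuclideanSpace ℂ (Fin n))} (h : SectionallyPValentOn f W p)
    (a : EuclideanSpace ℂ (Fin n)) {b : EuclideanSpace ℂ (Fin n)} (hb : b ≠ 0) :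
    PValentOn (fun t : ℂ => f (a + t • b)) {t | a + t • b ∈ W} p := by
  intro c
  by_contra! hlt
  obtain ⟨s, hs, hcard⟩ := exists_subset_encard_eq (Order.add_one_le_of_lt hlt)
  have hfin : s.Finite := finite_of_encard_eq_coe (k := p + 1) (by exact_mod_cast hcard)
  have hle := h a b hb c hfin.toFinset fun t ht => hs (hfin.mem_toFinset.1 ht)
  rw [← ncard_eq_toFinset_card s hfin] at hle
  have : (s.ncard : ℕ∞) = p + 1 := by rw [hfin.cast_ncard_eq, hcard]
  have : s.ncard = p + 1 := by exact_mod_cast this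
  omega

lemma bddAbove_norm_image_ball {E F : Type*} [PseudoMetricSpace E] [ProperSpace E]
    [SeminormedAddCommGroup F] {f : E → F} {z₀ : E} {r R : ℝ} (hf : ContinuousOn f (ball z₀ R))
    (hr : r < R) : BddAbove ((fun w => ‖f w‖) '' ball z₀ r) :=
  ((isCompact_closedBall z₀ r).bddAbove_image (hf.mono (closedBall_subset_ball hr)).norm).mono
    (image_mono ball_subset_closedBall)

end Development

/-- Doubling inequality for sectionally `p`-valent functions on concentric balls in `ℂⁿ`:
there is `A'_p > 0` such that for `0 < β < α < 1` and `f` analytic and sectionally `p`-valent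
in a ball `B`, `sup_{αB} |f| ≤ c_p(α,β) · sup_{βB} |f|` with
`c_p(α,β) = ((p+1)α^p + A'_p/(1-α)^{2p+1})/β^p`. -/
theorem doubling_pvalent_concentric_balls (p : ℕ) (hp : 1 ≤ p) :
    ∃ A : ℝ, 0 < A ∧
      ∀ (n : ℕ) (α β : ℝ), 0 < β → β < α → α < 1 →
      ∀ (z₀ : EuclideanSpace ℂ (Fin n)) (R : ℝ), 0 < R →
      ∀ f : EuclideanSpace ℂ (Fin n) → ℂ,
        AnalyticOnNhd ℂ f (ball z₀ R) → SectionallyPValentOn f (ball z₀ R) p →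
        ∀ z ∈ ball z₀ (α * R),
          ‖f z‖ ≤ (((p : ℝ) + 1) * α ^ p + A / (1 - α) ^ (2 * p + 1)) / β ^ p *
            sSup ((fun w => ‖f w‖) '' ball z₀ (β * R)) := by
  refine ⟨2 * 8 ^ (2 * p), by positivity, fun n α β hβ hβα hα z₀ R hR f hf hv z hz => ?_⟩
  exact doubling_pvalent_concentric_balls_general hβ hβα.le hα hf
    (fun b hb => hv.pValentOn_line z₀ hb)
    (bddAbove_norm_image_ball hf.continuousOn (mul_lt_of_lt_one_left hR (hβα.trans hα))) hz
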